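/- There exists n₀ ∈ ℕ such that for all integers n > n₀, both IR(2K₂, K_{1,n}) ≤ n + 2·n·(log n)^{−1/4} and IR(P₄, K_{1,n}) ≤ n + 2·n·(log n)^{−1/4} hold. -/

import Mathlib

open SimpleGraph

def ArrowsInd {V α β : Type*} (F : SimpleGraph V) (H : SimpleGraph α) (G : SimpleGraph β) : Prop :=
  ∀ c : Sym2 V → Bool,
    (∃ f : H ↪g F, ∀ u v, H.Adj u v → c s(f u, f v) = true) ∨
    (∃ g : G ↪g F, ∀ u v, G.Adj u v → c s(g u, g v) = false)

noncomputable def IR {α β : Type*} (H : SimpleGraph α) (G : SimpleGraph β) : ℕ :=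
  sInf {N : ℕ | ∃ F : SimpleGraph (Fin N), ArrowsInd F H G}

def StarGraph (n : ℕ) : SimpleGraph (Fin 1 ⊕ Fin n) := completeBipartiteGraph (Fin 1) (Fin n)

/-- The graph 2K₂ consisting of two disjoint edges. -/
def TwoK2 : SimpleGraph (Fin 4) :=
  SimpleGraph.fromEdgeSet {s((0 : Fin 4), (1 : Fin 4)), s((2 : Fin 4), (3 : Fin 4))}

/-- Transfer from an arbitrary finite vertex type. -/
lemma IR_le_card {V α β : Type*} [Fintype V] (F : SimpleGraph V) (H : SimpleGraph α)
    (G : SimpleGraph β) (h : ArrowsInd F H G) : IR H G ≤ Fintype.card V := by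
  apply Nat.sInf_le
  let e : V ≃ Fin (Fintype.card V) := Fintype.equivFin V
  refine ⟨F.map e.toEmbedding, ?_⟩
  let i : F ≃g F.map e.toEmbedding := SimpleGraph.Iso.map e F
  intro c
  rcases h (fun z => c (z.map e)) with ⟨f, hf⟩ | ⟨g, hg⟩
  · exact Or.inl ⟨i.toEmbedding.comp f, fun u v huv => hf u v huv⟩
  · exact Or.inr ⟨i.toEmbedding.comp g, fun u v huv => hg u v huv⟩

/-- The bipartite graph given by a relation. -/
def bipG {α β : Type*} (P : α → β → Prop) : SimpleGraph (α ⊕ β) where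
  Adj x y := match x, y with
    | Sum.inl a, Sum.inr b => P a b
    | Sum.inr b, Sum.inl a => P a b
    | _, _ => False
  symm := ⟨by rintro (a | b) (a' | b') h <;> exact h⟩
  loopless := ⟨by rintro (a | b) h <;> exact h⟩

section bip
variable {α β : Type*} {P : α → β → Prop}

@[simp] lemma bipG_lr (a : α) (b : β) : (bipG P).Adj (Sum.inl a) (Sum.inr b) ↔ P a b := Iff.rfl
@[simp] lemma bipG_rl (a : α) (b : β) : (bipG P).Adj (Sum.inr b) (Sum.inl a) ↔ P a b := Iff.rfl
@[simp] lemma bipG_ll (a a' : α) : ¬ (bipG P).Adj (Sum.inl a) (Sum.inl a') := fun h => h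
@[simp] lemma bipG_rr (b b' : β) : ¬ (bipG P).Adj (Sum.inr b) (Sum.inr b') := fun h => h

/-- Vector of four vertices. -/
def vec4 {V : Type*} (x y z w : V) : Fin 4 → V := ![x, y, z, w]

@[simp] lemma vec4_0 {V : Type*} (x y z w : V) : vec4 x y z w 0 = x := rfl
@[simp] lemma vec4_1 {V : Type*} (x y z w : V) : vec4 x y z w 1 = y := rfl
@[simp] lemma vec4_2 {V : Type*} (x y z w : V) : vec4 x y z w 2 = z := rfl
@[simp] lemma vec4_3 {V : Type*} (x y z w : V) : vec4 x y z w 3 = w := rfl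

lemma emb4 {V : Type*} {F : SimpleGraph V} {H : SimpleGraph (Fin 4)} {x y z w : V}
    (c : Sym2 V → Bool)
    (hinj : Function.Injective (vec4 x y z w))
    (h01 : F.Adj x y ↔ H.Adj 0 1) (h02 : F.Adj x z ↔ H.Adj 0 2) (h03 : F.Adj x w ↔ H.Adj 0 3)
    (h12 : F.Adj y z ↔ H.Adj 1 2) (h13 : F.Adj y w ↔ H.Adj 1 3) (h23 : F.Adj z w ↔ H.Adj 2 3)
    (c01 : H.Adj 0 1 → c s(x, y) = true) (c02 : H.Adj 0 2 → c s(x, z) = true)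
    (c03 : H.Adj 0 3 → c s(x, w) = true) (c12 : H.Adj 1 2 → c s(y, z) = true)
    (c13 : H.Adj 1 3 → c s(y, w) = true) (c23 : H.Adj 2 3 → c s(z, w) = true) :
    ∃ f : H ↪g F, ∀ u v, H.Adj u v → c s(f u, f v) = true := by
  have key : ∀ u v : Fin 4, u < v →
      (F.Adj (vec4 x y z w u) (vec4 x y z w v) ↔ H.Adj u v) ∧
      (H.Adj u v → c s(vec4 x y z w u, vec4 x y z w v) = true) := by
    intro u v huv
    fin_cases u <;> fin_cases v <;> first
      | exact absurd huv (by decide)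
      | exact ⟨h01, c01⟩
      | exact ⟨h02, c02⟩
      | exact ⟨h03, c03⟩
      | exact ⟨h12, c12⟩
      | exact ⟨h13, c13⟩
      | exact ⟨h23, c23⟩
  have key2 : ∀ u v : Fin 4,
      (F.Adj (vec4 x y z w u) (vec4 x y z w v) ↔ H.Adj u v) ∧
      (H.Adj u v → c s(vec4 x y z w u, vec4 x y z w v) = true) := by
    intro u v
    rcases lt_trichotomy u v with h | h | h
    · exact key u v h
    · subst h; simp
    · rw [F.adj_comm, H.adj_comm, Sym2.eq_swap]; exact key v u h
  exact ⟨⟨⟨vec4 x y z w, hinj⟩, fun {u v} => (key2 u v).1⟩, fun u v => (key2 u v).2⟩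

lemma inj4 {a a' : α} {b b' : β} (ha : a ≠ a') (hb : b ≠ b') :
    Function.Injective (vec4 (Sum.inl a : α ⊕ β) (Sum.inr b) (Sum.inl a') (Sum.inr b')) := by
  intro u v h
  fin_cases u <;> fin_cases v <;> simp_all [vec4]

lemma emb_twoK2 (c : Sym2 (α ⊕ β) → Bool) {a a' : α} {b b' : β} (ha : a ≠ a')
    (h1 : P a b) (h2 : P a' b') (h3 : ¬ P a b') (h4 : ¬ P a' b)
    (c1 : c s(Sum.inl a, Sum.inr b) = true) (c2 : c s(Sum.inl a', Sum.inr b') = true) :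
    ∃ f : TwoK2 ↪g bipG P, ∀ u v, TwoK2.Adj u v → c s(f u, f v) = true := by
  have hb : b ≠ b' := by rintro rfl; exact h3 h1
  refine emb4 c (inj4 ha hb) ?_ ?_ ?_ ?_ ?_ ?_ ?_ ?_ ?_ ?_ ?_ ?_ <;> simp [TwoK2, *]

lemma emb_path (c : Sym2 (α ⊕ β) → Bool) {a a' : α} {b b' : β} (ha : a ≠ a')
    (h1 : P a b) (h2 : P a' b') (h3 : ¬ P a b') (h4 : P a' b)
    (c1 : c s(Sum.inl a, Sum.inr b) = true) (c2 : c s(Sum.inl a', Sum.inr b') = true)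
    (c3 : c s(Sum.inl a', Sum.inr b) = true) :
    ∃ f : pathGraph 4 ↪g bipG P, ∀ u v, (pathGraph 4).Adj u v → c s(f u, f v) = true := by
  have hb : b ≠ b' := by rintro rfl; exact h3 h1
  have c3' : c s(Sum.inr b, Sum.inl a') = true := by rw [Sym2.eq_swap]; exact c3
  refine emb4 c (inj4 ha hb) ?_ ?_ ?_ ?_ ?_ ?_ ?_ ?_ ?_ ?_ ?_ ?_ <;>
    simp [pathGraph_adj, *]

lemma emb_star (c : Sym2 (α ⊕ β) → Bool) (a : α) (n : ℕ) (T : Finset β) (hT : n ≤ T.card)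
    (h : ∀ b ∈ T, P a b ∧ c s(Sum.inl a, Sum.inr b) = false) :
    ∃ g : StarGraph n ↪g bipG P, ∀ u v, (StarGraph n).Adj u v → c s(g u, g v) = false := by
  classical
  obtain ⟨e⟩ : Nonempty (Fin n ↪ T) :=
    Function.Embedding.nonempty_of_card_le (by simpa using hT)
  let g : Fin 1 ⊕ Fin n → α ⊕ β := Sum.map (fun _ => a) (fun i => (e i : β))
  have hg : Function.Injective g := by
    apply Function.Injective.sumMap
    · intro x y _; exact Subsingleton.elim _ _
    · exact Subtype.val_injective.comp e.injective
  refine ⟨⟨⟨g, hg⟩, ?_⟩, ?_⟩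
  · rintro (x | x) (y | y)
    · simp [g, StarGraph]
    · simpa [g, StarGraph] using (h _ (e y).2).1
    · simpa [g, StarGraph] using (h _ (e x).2).1
    · simp [g, StarGraph]
  · rintro (x | x) (y | y) hxy
    · simp [StarGraph] at hxy
    · exact (h _ (e y).2).2
    · have := (h _ (e x).2).2
      rw [Sym2.eq_swap] at this
      exact this
    · simp [StarGraph] at hxy

end bip

/-- Right-hand part. -/
abbrev BB (k q s : ℕ) := (Fin k → Fin q) × Fin s

/-- `a` is joined to `(t,i)` iff the `a`-th coordinate of `t` is nonzero. -/
def PP (k q s : ℕ) (a : Fin k) (b : BB k q s) : Prop := (b.1 a).val ≠ 0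

open Classical in
lemma card_avoid (k q s : ℕ) (hq : 1 ≤ q) (S : Finset (Fin k)) :
    (Finset.univ.filter (fun b : BB k q s => ∀ a ∈ S, PP k q s a b)).card
      = (q - 1) ^ S.card * q ^ (k - S.card) * s := by
  have h1 : (Finset.univ.filter (fun b : BB k q s => ∀ a ∈ S, PP k q s a b))
      = (Fintype.piFinset (fun a : Fin k => if a ∈ S then
          Finset.univ.filter (fun x : Fin q => x.val ≠ 0) else Finset.univ)) ×ˢ
        (Finset.univ : Finset (Fin s)) := by
    ext ⟨t, i⟩
    rw [Finset.mem_filter, Finset.mem_product, Fintype.mem_piFinset]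
    simp only [Finset.mem_univ, true_and, and_true, PP]
    refine forall_congr' fun a => ?_
    by_cases ha : a ∈ S <;> simp [ha]
  have h2 : (Finset.univ.filter (fun x : Fin q => x.val ≠ 0)).card = q - 1 := by
    obtain ⟨r, rfl⟩ : ∃ r, q = r + 1 := ⟨q - 1, by omega⟩
    have : (Finset.univ.filter (fun x : Fin (r+1) => x.val ≠ 0)) = {0}ᶜ := by
      ext x
      rw [Finset.mem_filter, Finset.mem_compl, Finset.mem_singleton, Fin.ext_iff]
      exact and_iff_right (Finset.mem_univ _)
    rw [this, Finset.card_compl]; simp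
  have h3 : (Fintype.piFinset (fun a : Fin k => if a ∈ S then
          Finset.univ.filter (fun x : Fin q => x.val ≠ 0) else Finset.univ)).card
        = (q - 1) ^ S.card * q ^ (k - S.card) := by
    rw [Fintype.card_piFinset]
    simp only [apply_ite Finset.card, h2, Finset.card_univ, Fintype.card_fin]
    rw [Finset.prod_ite]
    simp only [Finset.prod_const]
    congr 2
    · congr 1; ext; simp
    · have : (Finset.univ.filter (fun a => a ∉ S)) = Sᶜ := by ext; simp
      rw [this, Finset.card_compl, Fintype.card_fin]
  have h4 := congrArg Finset.card h1
  rw [Finset.card_product, h3, Finset.card_univ, Fintype.card_fin] at h4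
  convert h4

lemma pow_aux (q D : ℕ) (hq : 2 ≤ q) (hD : q ^ 2 ≤ D) : (q - 1) ^ D * q ≤ q ^ D := by
  obtain ⟨r, rfl⟩ : ∃ r, q = r + 1 := ⟨q - 1, by omega⟩
  simp only [Nat.add_sub_cancel]
  have hr : (0 : ℝ) < r := by exact_mod_cast (by omega : 0 < r)
  have hB := one_add_mul_le_pow (a := 1 / (r : ℝ)) (by have : 0 < 1 / (r:ℝ) := by positivity
                                                       linarith) D
  have hD' : ((r : ℝ) + 1) ^ 2 ≤ D := by exact_mod_cast hD
  have h1 : (r : ℝ) + 1 ≤ 1 + D * (1 / r) := by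
    rw [mul_one_div]
    have : (r : ℝ) ≤ D / r := by
      rw [le_div_iff₀ hr]; nlinarith
    linarith
  have h2 : (r : ℝ) + 1 ≤ (1 + 1 / (r : ℝ)) ^ D := h1.trans hB
  have h3 : (r : ℝ) ^ D * (r + 1) ≤ (r + 1) ^ D := by
    calc (r : ℝ) ^ D * (r + 1) ≤ r ^ D * (1 + 1 / (r : ℝ)) ^ D := by gcongr
      _ = (r + 1) ^ D := by rw [← mul_pow]; congr 1; field_simp
  exact_mod_cast h3

section main
open Classical

variable {k q s n : ℕ}

/-- Red neighbourhood. -/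
noncomputable def Rd (k q s : ℕ) (c : Sym2 (Fin k ⊕ BB k q s) → Bool) (a : Fin k) :
    Finset (BB k q s) :=
  Finset.univ.filter (fun b => PP k q s a b ∧ c s(Sum.inl a, Sum.inr b) = true)

lemma star_or_red (hq : 2 ≤ q) (hk : 1 ≤ k) (hn : n ≤ (q - 2) * q ^ (k - 1) * s)
    (c : Sym2 (Fin k ⊕ BB k q s) → Bool)
    (h : ¬ ∃ g : StarGraph n ↪g bipG (PP k q s),
      ∀ u v, (StarGraph n).Adj u v → c s(g u, g v) = false) (a : Fin k) :
    q ^ (k - 1) * s < (Rd k q s c a).card := by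
  by_contra hlt
  apply h
  refine emb_star c a n
    (Finset.univ.filter (fun b => PP k q s a b ∧ c s(Sum.inl a, Sum.inr b) = false)) ?_ ?_
  · have h1 := card_avoid k q s (by omega) {a}
    simp only [Finset.mem_singleton, forall_eq, Finset.card_singleton, pow_one] at h1
    have h2 := Finset.card_filter_add_card_filter_not
      (s := Finset.univ.filter (fun b : BB k q s => PP k q s a b))
      (fun b => c s(Sum.inl a, Sum.inr b) = true)
    rw [Finset.filter_filter, Finset.filter_filter] at h2
    simp only [Bool.not_eq_true] at h2
    unfold Rd at hlt
    have h3 : (q - 1) * q ^ (k - 1) * s = (q - 2) * q ^ (k - 1) * s + q ^ (k - 1) * s := by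
      obtain ⟨r, rfl⟩ : ∃ r, q = r + 2 := ⟨q - 2, by omega⟩
      simp only [Nat.add_sub_cancel, show r + 2 - 1 = r + 1 by omega]
      ring
    have h1' : (Finset.univ.filter (fun b : BB k q s => PP k q s a b)).card
      = (q - 1) * q ^ (k - 1) * s := by convert h1
    omega
  · intro b hb; simpa using hb

lemma red_small (hq : 2 ≤ q) (c : Sym2 (Fin k ⊕ BB k q s) → Bool) (a : Fin k)
    (S : Finset (Fin k)) (hS : q ^ 2 ≤ S.card)
    (h : ∀ a' ∈ S, ∀ b ∈ Rd k q s c a, PP k q s a' b) :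
    (Rd k q s c a).card ≤ q ^ (k - 1) * s := by
  have h1 := card_avoid k q s (by omega) S
  have h2 : Rd k q s c a ⊆
      Finset.univ.filter (fun b : BB k q s => ∀ a ∈ S, PP k q s a b) := by
    intro b hb
    simp only [Finset.mem_filter, Finset.mem_univ, true_and]
    exact fun a' ha' => h a' ha' b hb
  have h3 : (Rd k q s c a).card ≤ (q - 1) ^ S.card * q ^ (k - S.card) * s := by
    rw [← h1]; convert Finset.card_le_card h2
  refine h3.trans (Nat.mul_le_mul_right _ ?_)
  have hSk : S.card ≤ k := by simpa using Finset.card_le_univ S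
  have hS1 : 1 ≤ S.card := le_trans (Nat.one_le_pow _ _ (by omega)) hS
  have h4 := pow_aux q S.card hq hS
  have h5 : (q - 1) ^ S.card ≤ q ^ (S.card - 1) := by
    have : q ^ S.card = q ^ (S.card - 1) * q := by rw [← pow_succ]; congr 1; omega
    rw [this] at h4
    exact Nat.le_of_mul_le_mul_right h4 (by omega)
  calc (q - 1) ^ S.card * q ^ (k - S.card) ≤ q ^ (S.card - 1) * q ^ (k - S.card) := by gcongr
    _ = q ^ (k - 1) := by rw [← pow_add]; congr 1; omega

lemma arrows_twoK2 (hq : 3 ≤ q) (hk : k = q ^ 3) (hn : n ≤ (q - 2) * q ^ (k - 1) * s) :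
    ArrowsInd (bipG (PP k q s)) TwoK2 (StarGraph n) := by
  intro c
  by_contra hcon
  rw [not_or] at hcon
  obtain ⟨hA, hB⟩ := hcon
  have hk1 : 1 ≤ k := by rw [hk]; exact Nat.one_le_pow _ _ (by omega)
  have hR := star_or_red (by omega) hk1 hn c hB
  let Out : Fin k → Finset (Fin k) := fun a =>
    Finset.univ.filter (fun a' => ∀ b ∈ Rd k q s c a, PP k q s a' b)
  have hOut : ∀ a, (Out a).card < q ^ 2 := by
    intro a
    by_contra hlt
    have := red_small (by omega) c a (Out a) (by omega) (by
      intro a' ha' ; simpa [Out] using ha')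
    have := hR a
    omega
  have hpair : ∀ a a', a ∈ Out a' ∨ a' ∈ Out a := by
    intro a a'
    by_cases haa : a = a'
    · subst haa
      left
      simp only [Out, Finset.mem_filter, Finset.mem_univ, true_and, Rd]
      exact fun b hb => hb.1
    by_contra hno
    simp only [Out, Finset.mem_filter, Finset.mem_univ, true_and, not_or, not_forall, Rd] at hno
    obtain ⟨⟨b', ⟨hb', hcb'⟩, hnb'⟩, ⟨b, ⟨hb, hcb⟩, hnb⟩⟩ := hno
    exact hA (emb_twoK2 c haa hb hb' hnb' hnb hcb hcb')
  have hcover : (Finset.univ : Finset (Fin k × Fin k)) ⊆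
      (Finset.univ.sigma Out).image (fun p => (p.1, p.2)) ∪
      (Finset.univ.sigma Out).image (fun p => (p.2, p.1)) := by
    rintro ⟨a, a'⟩ -
    simp only [Finset.mem_union, Finset.mem_image, Finset.mem_sigma, Finset.mem_univ, true_and]
    rcases hpair a a' with h | h
    · exact Or.inr ⟨⟨a', a⟩, h, rfl⟩
    · exact Or.inl ⟨⟨a, a'⟩, h, rfl⟩
  have h1 := (Finset.card_le_card hcover).trans (Finset.card_union_le _ _)
  have h2 : (Finset.univ.sigma Out).card ≤ k * q ^ 2 := by
    rw [Finset.card_sigma]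
    calc ∑ a, (Out a).card ≤ ∑ a : Fin k, q ^ 2 := Finset.sum_le_sum fun a _ => (hOut a).le
      _ = k * q ^ 2 := by simp
  have h3 := (Finset.card_image_le (s := Finset.univ.sigma Out)
    (f := fun p => ((p.1, p.2) : Fin k × Fin k)))
  have h4 := (Finset.card_image_le (s := Finset.univ.sigma Out)
    (f := fun p => ((p.2, p.1) : Fin k × Fin k)))
  have h5 : (Finset.univ : Finset (Fin k × Fin k)).card = k * k := by simp
  have h6 : k * k ≤ k * (2 * q ^ 2) := by
    have : k * (2 * q ^ 2) = k * q ^ 2 + k * q ^ 2 := by ring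
    omega
  have h7 : k ≤ 2 * q ^ 2 := Nat.le_of_mul_le_mul_left h6 (by omega)
  rw [hk] at h7
  have : 3 * q ^ 2 ≤ q ^ 3 := by rw [pow_succ q 2, mul_comm]; gcongr
  have : 0 < q ^ 2 := by positivity
  omega

lemma arrows_path (hq : 3 ≤ q) (hk : k = q ^ 3) (hn : n ≤ (q - 2) * q ^ (k - 1) * s) :
    ArrowsInd (bipG (PP k q s)) (pathGraph 4) (StarGraph n) := by
  intro c
  by_contra hcon
  rw [not_or] at hcon
  obtain ⟨hA, hB⟩ := hcon
  have hk1 : 1 ≤ k := by rw [hk]; exact Nat.one_le_pow _ _ (by omega)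
  have hR := star_or_red (by omega) hk1 hn c hB
  -- a vertex on the right in many red neighbourhoods
  have hb : ∃ b : BB k q s, q ^ 2 < (Finset.univ.filter (fun a => b ∈ Rd k q s c a)).card := by
    by_contra hno
    push Not at hno
    have h1 : ∑ a : Fin k, (Rd k q s c a).card
        = ∑ b : BB k q s, (Finset.univ.filter (fun a => b ∈ Rd k q s c a)).card := by
      simp only [Finset.card_eq_sum_ones, Finset.sum_filter]
      rw [Finset.sum_comm]
      refine Finset.sum_congr rfl fun a _ => ?_
      rw [← Finset.sum_filter]
      congr 1; ext; simp
    have h2 : ∑ b : BB k q s, (Finset.univ.filter (fun a => b ∈ Rd k q s c a)).card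
        ≤ (q ^ k * s) * q ^ 2 := by
      refine (Finset.sum_le_sum fun b _ => hno b).trans ?_
      simp
    have h3 : k * (q ^ (k - 1) * s + 1) ≤ ∑ a : Fin k, (Rd k q s c a).card := by
      calc k * (q ^ (k - 1) * s + 1) = ∑ a : Fin k, (q ^ (k - 1) * s + 1) := by simp
        _ ≤ _ := Finset.sum_le_sum fun a _ => hR a
    have h4 : (q ^ k * s) * q ^ 2 = k * (q ^ (k - 1) * s) := by
      have : q ^ k = q ^ (k - 1) * q := by rw [← pow_succ]; congr 1; omega
      calc q ^ k * s * q ^ 2 = q ^ 3 * (q ^ (k - 1) * s) := by rw [this]; ring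
        _ = k * (q ^ (k - 1) * s) := by rw [← hk]
    have h5 : k * (q ^ (k - 1) * s + 1) = k * (q ^ (k - 1) * s) + k := by ring
    omega
  obtain ⟨b, hb⟩ := hb
  set S := Finset.univ.filter (fun a => b ∈ Rd k q s c a) with hS
  obtain ⟨a, ha⟩ : S.Nonempty := Finset.card_pos.mp (by omega)
  have hsm := red_small (by omega) c a S hb.le (by
    intro a' ha' b' hb'
    by_contra hP
    simp only [hS, Rd, Finset.mem_filter, Finset.mem_univ, true_and] at ha ha' hb'
    refine hA (emb_path c (a := a') (a' := a) (b := b) (b' := b') ?_ ha'.1 hb'.1 hP ha.1 ha'.2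
      hb'.2 ha.2)
    rintro rfl
    exact hP hb'.1)
  have := hR a
  omega

end main

lemma IR_bounds (q n : ℕ) (hq : 6 ≤ q) :
    ∃ N : ℕ, IR TwoK2 (StarGraph n) ≤ N ∧ IR (pathGraph 4) (StarGraph n) ≤ N ∧
      (N : ℝ) ≤ n + 3 * n / q + 2 * (q : ℝ) ^ (q ^ 3) := by
  set k := q ^ 3 with hk
  have hk1 : 1 ≤ k := by rw [hk]; exact Nat.one_le_pow _ _ (by omega)
  set d := (q - 2) * q ^ (k - 1) with hd
  have hdpos : 0 < d := by
    have : 0 < q - 2 := by omega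
    positivity
  set s := n / d + 1 with hs
  have hn : n ≤ (q - 2) * q ^ (k - 1) * s := by
    rw [← hd, hs]; exact (Nat.lt_mul_div_succ n hdpos).le
  have hcard : Fintype.card (Fin k ⊕ BB k q s) = k + q ^ k * s := by simp
  refine ⟨k + q ^ k * s, ?_, ?_, ?_⟩
  · rw [← hcard]; exact IR_le_card _ _ _ (arrows_twoK2 (by omega) hk hn)
  · rw [← hcard]; exact IR_le_card _ _ _ (arrows_path (by omega) hk hn)
  have hkq : (k : ℝ) ≤ (q : ℝ) ^ k := by
    exact_mod_cast (Nat.lt_pow_self (by omega : 1 < q)).le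
  have hqr : (6 : ℝ) ≤ q := by exact_mod_cast hq
  have hsr : (s : ℝ) ≤ n / d + 1 := by
    rw [hs]; push_cast; gcongr; exact Nat.cast_div_le
  have hdr : (d : ℝ) = (q - 2) * (q : ℝ) ^ (k - 1) := by
    rw [hd]; push_cast [Nat.cast_sub (by omega : 2 ≤ q)]; rfl
  have hpow : (q : ℝ) ^ k = (q : ℝ) ^ (k - 1) * q := by rw [← pow_succ]; congr 1; omega
  have hpp : (0 : ℝ) < (q : ℝ) ^ (k - 1) := by positivity
  have h1 : (q : ℝ) ^ k * (n / d) = n * (q / (q - 2)) := by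
    have : (q : ℝ) - 2 ≠ 0 := by linarith
    rw [hdr, hpow]; field_simp
  have h2 : (q : ℝ) / (q - 2) ≤ 1 + 3 / q := by
    rw [div_le_iff₀ (by linarith)]
    have : (1 + 3 / (q : ℝ)) * (q - 2) = q + 1 - 6 / q := by field_simp; ring
    rw [this]
    have : 6 / (q : ℝ) ≤ 1 := by rw [div_le_one (by linarith)]; exact hqr
    linarith
  have h3 : (n : ℝ) * (q / (q - 2)) ≤ n * (1 + 3 / q) := by gcongr
  have h4 : (q : ℝ) ^ k * s ≤ (q : ℝ) ^ k * (n / d + 1) := by gcongr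
  have h5 : (n : ℝ) * (1 + 3 / q) = n + 3 * n / q := by ring
  push_cast
  linarith

lemma ev_pow : ∃ Q : ℕ, ∀ q : ℕ, Q ≤ q →
    (q : ℝ) ^ (q ^ 3 + 2) ≤ (2 : ℝ) ^ (((q : ℝ) / 3) ^ 4) := by
  have h := (Real.isLittleO_log_id_atTop.comp_tendsto tendsto_natCast_atTop_atTop).def
    (show (0 : ℝ) < Real.log 2 / 243 by positivity [Real.log_pos (by norm_num : (1:ℝ) < 2)])
  rw [Filter.eventually_atTop] at h
  obtain ⟨Q, hQ⟩ := h
  refine ⟨max Q 1, fun q hq => ?_⟩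
  have hq1 : (1 : ℝ) ≤ q := by exact_mod_cast (le_max_right Q 1).trans hq
  have h1 := hQ q ((le_max_left _ _).trans hq)
  simp only [Function.comp, id, Real.norm_eq_abs] at h1
  rw [abs_of_nonneg (Real.log_nonneg hq1), abs_of_nonneg (by linarith)] at h1
  rw [← Real.log_le_log_iff (by positivity) (by positivity), Real.log_pow,
    Real.log_rpow (by norm_num)]
  push_cast
  have h3 : (1 : ℝ) ≤ (q : ℝ) ^ 3 := one_le_pow₀ hq1
  calc ((q : ℝ) ^ 3 + 2) * Real.log q ≤ (3 * (q : ℝ) ^ 3) * (Real.log 2 / 243 * q) := by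
        gcongr
        linarith
    _ = (q / 3) ^ 4 * Real.log 2 := by ring

/-- for all sufficiently large n, both IR(2K₂, K_{1,n}) and
IR(P₄, K_{1,n}) are at most n + 2n·(log₂ n)^{−1/4}. -/
theorem IR_2K2_P4_upper :
    ∃ n₀ : ℕ, ∀ n : ℕ, n₀ < n →
      (IR TwoK2 (StarGraph n) : ℝ) ≤ n + 2 * n * (Real.logb 2 n) ^ (-(1 / 4 : ℝ)) ∧
      (IR (SimpleGraph.pathGraph 4) (StarGraph n) : ℝ)
        ≤ n + 2 * n * (Real.logb 2 n) ^ (-(1 / 4 : ℝ)) := by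
  obtain ⟨Q, hQ⟩ := ev_pow
  -- L ≥ X where X = max Q 3
  set X : ℕ := Q + 3 with hX
  refine ⟨2 ^ (X ^ 4), fun n hn => ?_⟩
  have hnpos : (0 : ℝ) < n := by exact_mod_cast (Nat.zero_le _).trans_lt hn
  have hlog : (X : ℝ) ^ 4 ≤ Real.logb 2 n := by
    rw [Real.le_logb_iff_rpow_le (by norm_num) hnpos]
    have : ((2 : ℝ) ^ (X ^ 4 : ℕ)) ≤ n := by exact_mod_cast hn.le
    rw [← Real.rpow_natCast] at this
    exact_mod_cast this
  have hlog0 : 0 ≤ Real.logb 2 n := le_trans (by positivity) hlog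
  set L : ℝ := (Real.logb 2 n) ^ (1 / 4 : ℝ) with hL
  have hL0 : 0 ≤ L := Real.rpow_nonneg hlog0 _
  have hL4 : L ^ 4 = Real.logb 2 n := by
    rw [hL, ← Real.rpow_natCast, ← Real.rpow_mul hlog0]; norm_num
  have hXL : (X : ℝ) ≤ L := by
    rw [← hL4] at hlog
    exact le_of_pow_le_pow_left₀ (by norm_num) hL0 hlog
  have hQ0 : (0 : ℝ) ≤ Q := Nat.cast_nonneg _
  have hXc : (X : ℝ) = Q + 3 := by rw [hX]; push_cast; rfl
  have hL3 : 3 ≤ L := by linarith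
  set q := ⌈2 * L⌉₊ with hq
  have hq1 : 2 * L ≤ q := Nat.le_ceil _
  have hq2 : (q : ℝ) ≤ 3 * L := by
    have := (Nat.ceil_lt_add_one (show 0 ≤ 2 * L by linarith)).le
    rw [← hq] at this
    linarith
  have hq6 : 6 ≤ q := by
    have : (6 : ℝ) ≤ q := by linarith
    exact_mod_cast this
  have hqQ : Q ≤ q := by
    have : (Q : ℝ) ≤ q := by linarith
    exact_mod_cast this
  have h1 := hQ q hqQ
  have h2 : (2 : ℝ) ^ (((q : ℝ) / 3) ^ 4) ≤ n := by
    calc (2 : ℝ) ^ (((q : ℝ) / 3) ^ 4) ≤ 2 ^ (Real.logb 2 n) := by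
          apply Real.rpow_le_rpow_of_exponent_le (by norm_num)
          rw [← hL4]
          gcongr
          linarith
      _ = n := Real.rpow_logb (by norm_num) (by norm_num) hnpos
  have h3 : (q : ℝ) ^ (q ^ 3) * q ^ 2 ≤ n := by rw [← pow_add]; exact h1.trans h2
  have hqr : (6 : ℝ) ≤ q := by exact_mod_cast hq6
  have hLpos : 0 < L := by linarith
  have h4 : 2 * (q : ℝ) ^ (q ^ 3) ≤ n / (2 * L) := by
    rw [le_div_iff₀ (by linarith)]
    have hp : (0 : ℝ) ≤ (q : ℝ) ^ (q ^ 3) := by positivity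
    calc 2 * (q : ℝ) ^ (q ^ 3) * (2 * L) = (q : ℝ) ^ (q ^ 3) * (2 * (2 * L)) := by ring
      _ ≤ (q : ℝ) ^ (q ^ 3) * q ^ 2 := by gcongr; nlinarith
      _ ≤ n := h3
  have h5 : 3 * (n : ℝ) / q ≤ 3 * n / (2 * L) := by gcongr
  have h6 : 3 * (n : ℝ) / (2 * L) + n / (2 * L) = 2 * n * L⁻¹ := by field_simp; ring
  have h7 : (Real.logb 2 n) ^ (-(1 / 4 : ℝ)) = L⁻¹ := Real.rpow_neg hlog0 _
  obtain ⟨N, hN1, hN2, hN3⟩ := IR_bounds q n hq6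
  rw [h7]
  have hN1' : (IR TwoK2 (StarGraph n) : ℝ) ≤ N := by exact_mod_cast hN1
  have hN2' : (IR (SimpleGraph.pathGraph 4) (StarGraph n) : ℝ) ≤ N := by exact_mod_cast hN2
  constructor <;> linarith
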